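/- Let s ≥ 0 be an integer. There exists a constant C > 0, depending only on s, such that for every R ≥ 1 and every smooth divergence-free vector field u : ℝ³ → ℝ³ with finite uniformly local Sobolev norm ‖u‖_{H^s_ul} := ∑_{|β| ≤ s} sup_{x ∈ ℝ³} ‖D^β u‖_{L²(B_1(x))}, the stream function ψ(x) = − ∫₀¹ τ (x × u(τx)) dτ satisfies ∑_{|α| ≤ s} ‖D^α ψ‖_{L²(B_R(0))} ≤ C R^{5/2} ‖u‖_{H^s_ul}. -/

import Mathlib

open MeasureTheory Metric
open scoped ENNReal

noncomputable section

/-- Abbreviation for three-dimensional Euclidean space. -/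
abbrev E3 := EuclideanSpace ℝ (Fin 3)

/-- The partial derivative in the `i`-th coordinate direction. -/
def pd {F : Type*} [NormedAddCommGroup F] [NormedSpace ℝ F]
    (i : Fin 3) (f : E3 → F) : E3 → F :=
  fun x => fderiv ℝ f x (EuclideanSpace.single i 1)

/-- The divergence `∂₁u¹ + ∂₂u² + ∂₃u³` of a vector field on `ℝ³`. -/
def divg (u : E3 → E3) : E3 → ℝ :=
  fun x => ∑ i, pd i (fun y => u y i) x

/-- The curl `(∂₂v³ − ∂₃v², ∂₃v¹ − ∂₁v³, ∂₁v² − ∂₂v¹)` of a vector field on `ℝ³`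
(with `0`-based indices). -/
def curl3 (v : E3 → E3) : E3 → E3 :=
  fun x => (WithLp.equiv 2 (Fin 3 → ℝ)).symm
    ![pd 1 (fun y => v y 2) x - pd 2 (fun y => v y 1) x,
      pd 2 (fun y => v y 0) x - pd 0 (fun y => v y 2) x,
      pd 0 (fun y => v y 1) x - pd 1 (fun y => v y 0) x]

/-- The cross product on `ℝ³`. -/
def cross3 (a b : E3) : E3 :=
  (WithLp.equiv 2 (Fin 3 → ℝ)).symm
    ![a 1 * b 2 - a 2 * b 1, a 2 * b 0 - a 0 * b 2, a 0 * b 1 - a 1 * b 0]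

/-- The stream function `ψ(x) = − ∫₀¹ τ (x × u(τx)) dτ` of Lemma 2.13. -/
def streamFun (u : E3 → E3) : E3 → E3 :=
  fun x => - ∫ τ in (0:ℝ)..1, τ • cross3 x (u (τ • x))

/-- The partial derivative `D^α` associated with a multi-index `α`. -/
def Dm {F : Type*} [NormedAddCommGroup F] [NormedSpace ℝ F]
    (α : Fin 3 → ℕ) (f : E3 → F) : E3 → F :=
  (List.finRange 3).foldr (fun i g => (pd i)^[α i] g) f

/-- The finite set of multi-indices `α` on `ℝ³` with `|α| ≤ s`. -/
def mSet (s : ℕ) : Finset (Fin 3 → ℕ) :=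
  (Finset.Iic (fun _ => s : Fin 3 → ℕ)).filter fun α => (∑ i, α i) ≤ s

/-- The uniformly local Sobolev norm `‖f‖_{H^s_ul} = ∑_{|α| ≤ s} sup_x ‖D^α f‖_{L²(B₁(x))}`. -/
def ulSobolev (s : ℕ) {F : Type*} [NormedAddCommGroup F] [NormedSpace ℝ F]
    (f : E3 → F) : ℝ≥0∞ :=
  ∑ α ∈ mSet s, ⨆ x : E3, eLpNorm (Dm α f) 2 (volume.restrict (ball x 1))

/-- The cross product as a continuous bilinear map. -/
def crossCLM : E3 →L[ℝ] E3 →L[ℝ] E3 :=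
  (LinearMap.mk₂ ℝ cross3
    (fun a a' b => by ext i; fin_cases i <;> simp [cross3] <;> ring)
    (fun c a b => by ext i; fin_cases i <;> simp [cross3] <;> ring)
    (fun a b b' => by ext i; fin_cases i <;> simp [cross3] <;> ring)
    (fun c a b => by ext i; fin_cases i <;> simp [cross3] <;> ring)).toContinuousBilinearMap

@[simp]
lemma crossCLM_apply (a b : E3) : crossCLM a b = cross3 a b := rfl

/-- The weighted radial average `x ↦ ∫₀¹ τ ^ (k + 1) g(τ x) dτ`. -/
def radialAvg {F : Type*} [NormedAddCommGroup F] [NormedSpace ℝ F]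
    (k : ℕ) (g : E3 → F) : E3 → F :=
  fun x => ∫ τ in (0:ℝ)..1, τ ^ (k + 1) • g (τ • x)

section Calculus

variable {F G : Type*} [NormedAddCommGroup F] [NormedSpace ℝ F]
  [NormedAddCommGroup G] [NormedSpace ℝ G]

lemma continuous_pow_smul_comp_smul {g : E3 → F} (hg : Continuous g) (k : ℕ) (x : E3) :
    Continuous fun τ : ℝ => τ ^ (k + 1) • g (τ • x) := by fun_prop

lemma streamFun_eq {u : E3 → E3} (hu : Continuous u) :
    streamFun u = fun x => -crossCLM x (radialAvg 0 u x) := by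
  funext x
  simp only [streamFun, radialAvg]
  rw [← ContinuousLinearMap.intervalIntegral_comp_comm _
    ((continuous_pow_smul_comp_smul hu 0 x).intervalIntegrable _ _)]
  simp [← crossCLM_apply]

lemma hasFDerivAt_radialAvg {g : E3 → F} (hg : ContDiff ℝ 1 g) (k : ℕ) (x : E3) :
    HasFDerivAt (radialAvg k g) (radialAvg (k + 1) (fderiv ℝ g) x) x := by
  have hg' : Continuous (fderiv ℝ g) := hg.continuous_fderiv one_ne_zero
  obtain ⟨M, hM⟩ := (isCompact_closedBall (0 : E3) (‖x‖ + 1)).exists_bound_of_continuousOn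
    hg'.continuousOn
  refine intervalIntegral.hasFDerivAt_integral_of_dominated_of_fderiv_le
    (F := fun x τ => τ ^ (k + 1) • g (τ • x))
    (F' := fun x τ => τ ^ (k + 1 + 1) • fderiv ℝ g (τ • x))
    (bound := fun _ => M) (ball_mem_nhds x one_pos)
    (.of_forall fun y => (continuous_pow_smul_comp_smul hg.continuous k y).aestronglyMeasurable)
    ((continuous_pow_smul_comp_smul hg.continuous k x).intervalIntegrable _ _)
    (continuous_pow_smul_comp_smul hg' (k + 1) x).aestronglyMeasurable
    (.of_forall fun τ hτ y hy => ?_) intervalIntegrable_const (.of_forall fun τ hτ y hy => ?_)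
  · rw [Set.uIoc_of_le zero_le_one] at hτ
    have hy' : ‖y‖ < ‖x‖ + 1 := by
      have := norm_le_norm_add_norm_sub x y
      rw [mem_ball_iff_norm] at hy
      linarith [norm_sub_rev x y]
    have hmem : τ • y ∈ closedBall (0 : E3) (‖x‖ + 1) := by
      rw [mem_closedBall_zero_iff, norm_smul, Real.norm_of_nonneg hτ.1.le]
      nlinarith [hτ.1, hτ.2, norm_nonneg y]
    rw [norm_smul, norm_pow, Real.norm_of_nonneg hτ.1.le]
    calc τ ^ (k + 1 + 1) * ‖fderiv ℝ g (τ • y)‖ ≤ 1 * ‖fderiv ℝ g (τ • y)‖ := by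
          gcongr; exact pow_le_one₀ hτ.1.le hτ.2
      _ ≤ M := by rw [one_mul]; exact hM _ hmem
  · have h1 : HasFDerivAt (fun z : E3 => τ • z) (τ • ContinuousLinearMap.id ℝ E3) y :=
      (hasFDerivAt_id y).const_smul τ
    have h2 := ((hg.differentiable one_ne_zero (τ • y)).hasFDerivAt.comp y h1).const_smul
      (τ ^ (k + 1))
    convert! h2 using 1
    ext v
    simp [pow_succ, smul_smul]

lemma fderiv_radialAvg {g : E3 → F} (hg : ContDiff ℝ 1 g) (k : ℕ) :
    fderiv ℝ (radialAvg k g) = radialAvg (k + 1) (fderiv ℝ g) :=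
  funext fun x => (hasFDerivAt_radialAvg hg k x).fderiv

lemma contDiff_nat_radialAvg (n : ℕ) : ∀ {F : Type} [NormedAddCommGroup F] [NormedSpace ℝ F]
    {g : E3 → F}, ContDiff ℝ (⊤ : ℕ∞) g → ∀ k, ContDiff ℝ n (radialAvg k g) := by
  induction n with
  | zero =>
    intro F _ _ g hg k
    have hd : Differentiable ℝ (radialAvg k g) := fun x =>
      (hasFDerivAt_radialAvg (hg.of_le (by exact_mod_cast le_top)) k x).differentiableAt
    exact contDiff_zero.2 hd.continuous
  | succ n ih =>
    intro F _ _ g hg k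
    have h1 : ContDiff ℝ 1 g := hg.of_le (by exact_mod_cast le_top)
    push_cast
    rw [contDiff_succ_iff_fderiv]
    refine ⟨fun x => (hasFDerivAt_radialAvg h1 k x).differentiableAt, by simp, ?_⟩
    rw [fderiv_radialAvg h1]
    exact ih (hg.fderiv_right (by simp)) (k + 1)

lemma contDiff_radialAvg {F : Type} [NormedAddCommGroup F] [NormedSpace ℝ F]
    {g : E3 → F} (hg : ContDiff ℝ (⊤ : ℕ∞) g) (k : ℕ) :
    ContDiff ℝ (⊤ : ℕ∞) (radialAvg k g) :=
  contDiff_infty.2 fun n => contDiff_nat_radialAvg n hg k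

lemma contDiff_pd {g : E3 → F} (hg : ContDiff ℝ (⊤ : ℕ∞) g) (i : Fin 3) :
    ContDiff ℝ (⊤ : ℕ∞) (pd i g) :=
  (hg.fderiv_right (m := (⊤ : ℕ∞)) (by simp)).clm_apply contDiff_const

lemma contDiff_iterate_pd {g : E3 → F} (hg : ContDiff ℝ (⊤ : ℕ∞) g) (i : Fin 3) (n : ℕ) :
    ContDiff ℝ (⊤ : ℕ∞) ((pd i)^[n] g) := by
  induction n with
  | zero => exact hg
  | succ n ih => rw [Function.iterate_succ_apply']; exact contDiff_pd ih i

lemma pd_add {f g : E3 → F} (hf : ContDiff ℝ (⊤ : ℕ∞) f) (hg : ContDiff ℝ (⊤ : ℕ∞) g)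
    (i : Fin 3) : pd i (fun x => f x + g x) = fun x => pd i f x + pd i g x := by
  funext x
  simp only [pd]
  rw [fderiv_fun_add (hf.differentiable (by simp) x) (hg.differentiable (by simp) x)]
  rfl

lemma iterate_pd_add {f g : E3 → F} (hf : ContDiff ℝ (⊤ : ℕ∞) f)
    (hg : ContDiff ℝ (⊤ : ℕ∞) g) (i : Fin 3) (n : ℕ) :
    (pd i)^[n] (fun x => f x + g x) = fun x => (pd i)^[n] f x + (pd i)^[n] g x := by
  induction n with
  | zero => rfl
  | succ n ih =>
    simp only [Function.iterate_succ_apply']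
    rw [ih, pd_add (contDiff_iterate_pd hf i n) (contDiff_iterate_pd hg i n)]

lemma pd_clm_comp (L : F →L[ℝ] G) {g : E3 → F} (hg : ContDiff ℝ (⊤ : ℕ∞) g) (i : Fin 3) :
    pd i (fun x => L (g x)) = fun x => L (pd i g x) := by
  funext x
  simp only [pd]
  have h : HasFDerivAt (fun y => L (g y)) (L ∘L fderiv ℝ g x) x :=
    L.hasFDerivAt.comp x (hg.differentiable (by simp) x).hasFDerivAt
  rw [h.fderiv]
  rfl

lemma iterate_pd_clm_comp (L : F →L[ℝ] G) {g : E3 → F} (hg : ContDiff ℝ (⊤ : ℕ∞) g)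
    (i : Fin 3) (n : ℕ) :
    (pd i)^[n] (fun x => L (g x)) = fun x => L ((pd i)^[n] g x) := by
  induction n with
  | zero => rfl
  | succ n ih =>
    simp only [Function.iterate_succ_apply']
    rw [ih, pd_clm_comp L (contDiff_iterate_pd hg i n)]

lemma pd_bilin (B : E3 →L[ℝ] F →L[ℝ] G) {w : E3 → F} (hw : ContDiff ℝ (⊤ : ℕ∞) w)
    (i : Fin 3) :
    pd i (fun x => B x (w x)) =
      fun x => B x (pd i w x) + B (EuclideanSpace.single i 1) (w x) := by
  funext x
  simp only [pd]
  have h := B.hasFDerivAt_of_bilinear (hasFDerivAt_id x)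
    (hw.differentiable (by simp) x).hasFDerivAt
  simp only [id_eq] at h
  rw [h.fderiv]
  simp

lemma iterate_pd_bilin (B : E3 →L[ℝ] F →L[ℝ] G) {w : E3 → F}
    (hw : ContDiff ℝ (⊤ : ℕ∞) w) (i : Fin 3) (n : ℕ) :
    (pd i)^[n] (fun x => B x (w x)) =
      fun x => B x ((pd i)^[n] w x) +
        ((n : ℝ) • B (EuclideanSpace.single i 1)) ((pd i)^[n - 1] w x) := by
  induction n with
  | zero => simp
  | succ n ih =>
    have hn := contDiff_iterate_pd hw i n
    have hn' := contDiff_iterate_pd hw i (n - 1)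
    rw [Function.iterate_succ_apply', ih, pd_add (by fun_prop) (by fun_prop), pd_bilin B hn,
      pd_clm_comp _ hn']
    funext x
    rcases n with - | n
    · simp
    · have hpd : pd i ((pd i)^[n + 1 - 1] w) = (pd i)^[n + 1] w :=
        (Function.iterate_succ_apply' ..).symm
      rw [hpd, Function.iterate_succ_apply' (pd i) (n + 1), Nat.add_sub_cancel]
      simp only [smul_apply]
      push_cast
      module

lemma Dm_eq (α : Fin 3 → ℕ) (f : E3 → F) :
    Dm α f = (pd 0)^[α 0] ((pd 1)^[α 1] ((pd 2)^[α 2] f)) := rfl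

lemma contDiff_Dm {f : E3 → F} (hf : ContDiff ℝ (⊤ : ℕ∞) f) (α : Fin 3 → ℕ) :
    ContDiff ℝ (⊤ : ℕ∞) (Dm α f) :=
  contDiff_iterate_pd (contDiff_iterate_pd (contDiff_iterate_pd hf _ _) _ _) _ _

/-- Leibniz rule for a product with the identity. -/
lemma Dm_bilin (B : E3 →L[ℝ] F →L[ℝ] G) {w : E3 → F} (hw : ContDiff ℝ (⊤ : ℕ∞) w)
    (α : Fin 3 → ℕ) :
    Dm α (fun x => B x (w x)) = fun x => B x (Dm α w x) +
      ∑ i, ((α i : ℝ) • B (EuclideanSpace.single i 1)) (Dm (α - Pi.single i 1) w x) := by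
  have h (i n) {g : E3 → F} (hg : ContDiff ℝ (⊤ : ℕ∞) g) := contDiff_iterate_pd hg i n
  have h2 := h 2 (α 2) hw
  have hlow2 := h 2 (α 2 - 1) hw
  have h12 := h 1 (α 1) h2
  have hpred2 := h 1 (α 1) hlow2
  have hpred1 := h 1 (α 1 - 1) h2
  rw [Dm_eq, iterate_pd_bilin B hw, iterate_pd_add (by fun_prop) (by fun_prop),
    iterate_pd_bilin B h2, iterate_pd_clm_comp _ hlow2,
    iterate_pd_add (by fun_prop) (by fun_prop), iterate_pd_add (by fun_prop) (by fun_prop),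
    iterate_pd_bilin B h12, iterate_pd_clm_comp _ hpred1, iterate_pd_clm_comp _ hpred2]
  funext x
  simp [Dm_eq, Fin.sum_univ_three, add_assoc]

end Calculus

section RadialDerivatives

variable {F : Type} [NormedAddCommGroup F] [NormedSpace ℝ F]

lemma pd_radialAvg {g : E3 → F} (hg : ContDiff ℝ (⊤ : ℕ∞) g) (k : ℕ) (i : Fin 3) :
    pd i (radialAvg k g) = radialAvg (k + 1) (pd i g) := by
  have hg' : Continuous (fderiv ℝ g) := hg.continuous_fderiv (by simp)
  funext x
  simp only [pd]
  rw [fderiv_radialAvg (hg.of_le (by exact_mod_cast le_top))]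
  simp only [radialAvg]
  rw [ContinuousLinearMap.intervalIntegral_apply
    ((continuous_pow_smul_comp_smul hg' (k + 1) x).intervalIntegrable _ _)]
  rfl

lemma iterate_pd_radialAvg {g : E3 → F} (hg : ContDiff ℝ (⊤ : ℕ∞) g) (k : ℕ)
    (i : Fin 3) (n : ℕ) :
    (pd i)^[n] (radialAvg k g) = radialAvg (k + n) ((pd i)^[n] g) := by
  induction n with
  | zero => rfl
  | succ n ih =>
    rw [Function.iterate_succ_apply', Function.iterate_succ_apply', ih,
      pd_radialAvg (contDiff_iterate_pd hg i n), add_assoc]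

lemma Dm_radialAvg {g : E3 → F} (hg : ContDiff ℝ (⊤ : ℕ∞) g) (α : Fin 3 → ℕ) (k : ℕ) :
    Dm α (radialAvg k g) = radialAvg (k + α 2 + α 1 + α 0) (Dm α g) := by
  have h2 := contDiff_iterate_pd hg 2 (α 2)
  rw [Dm_eq, iterate_pd_radialAvg hg, iterate_pd_radialAvg h2,
    iterate_pd_radialAvg (contDiff_iterate_pd h2 1 _), Dm_eq]

end RadialDerivatives

section Estimates

variable {F : Type*} [NormedAddCommGroup F]

lemma eLpNorm_two_sq {α : Type*} [MeasurableSpace α] (f : α → F) (μ : Measure α) :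
    eLpNorm f 2 μ ^ 2 = ∫⁻ x, ‖f x‖ₑ ^ 2 ∂μ := by
  have h := eLpNorm_nnreal_pow_eq_lintegral (f := f) (μ := μ) (p := 2) two_ne_zero
  simpa using h

lemma setLIntegral_comp_smul_le {f : E3 → ℝ≥0∞} (hf : Measurable f) (R : ℝ) {τ : ℝ}
    (h0 : 0 < τ) (h1 : τ ≤ 1) :
    ∫⁻ x in ball (0 : E3) R, f (τ • x) ≤
      ENNReal.ofReal (τ ^ 3)⁻¹ * ∫⁻ x in ball (0 : E3) R, f x := by
  have hmap : Measure.map (τ • ·) (volume : Measure E3) = ENNReal.ofReal (τ ^ 3)⁻¹ • volume := by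
    rw [Measure.map_addHaar_smul volume h0.ne', abs_of_pos (by positivity)]
    simp
  rw [← lintegral_indicator measurableSet_ball, ← lintegral_indicator measurableSet_ball,
    ← smul_eq_mul, ← lintegral_smul_measure, ← hmap,
    lintegral_map (hf.indicator measurableSet_ball) (by fun_prop)]
  refine lintegral_mono fun x => ?_
  by_cases hx : x ∈ ball (0 : E3) R
  · have hx' : τ • x ∈ ball (0 : E3) R := by
      rw [mem_ball_zero_iff] at hx ⊢
      rw [norm_smul, Real.norm_of_nonneg h0.le]
      nlinarith [norm_nonneg x]
    simp [hx, hx']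
  · simp [hx]

lemma lintegral_rpow_neg_half :
    ∫⁻ τ in Set.Ioc (0:ℝ) 1, ENNReal.ofReal (τ ^ (-(1/2) : ℝ)) = 2 := by
  have hint : IntervalIntegrable (fun τ : ℝ => τ ^ (-(1/2) : ℝ)) volume 0 1 :=
    intervalIntegral.intervalIntegrable_rpow' (by norm_num)
  rw [← ofReal_integral_eq_lintegral_ofReal
    ((intervalIntegrable_iff_integrableOn_Ioc_of_le zero_le_one).1 hint)
    ((ae_restrict_iff' measurableSet_Ioc).2 (.of_forall fun τ hτ => Real.rpow_nonneg hτ.1.le _)),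
    ← intervalIntegral.integral_of_le zero_le_one, integral_rpow (Or.inl (by norm_num))]
  norm_num

/-- Pointwise weighted Cauchy–Schwarz bound for the radial average. -/
lemma enorm_radialAvg_sq_le [NormedSpace ℝ F] {g : E3 → F} (hg : Continuous g) (k : ℕ) (x : E3) :
    ‖radialAvg k g x‖ₑ ^ 2 ≤
      2 * ∫⁻ τ in Set.Ioc (0:ℝ) 1, ENNReal.ofReal (τ ^ (5/2 : ℝ)) * ‖g (τ • x)‖ₑ ^ 2 := by
  let p : ℝ → ℝ≥0∞ := fun τ => ENNReal.ofReal (τ ^ (-(1/4) : ℝ))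
  let q : ℝ → ℝ≥0∞ := fun τ => ENNReal.ofReal (τ ^ (5/4 : ℝ)) * ‖g (τ • x)‖ₑ
  have hp : Measurable p := by fun_prop
  have hq : Measurable q := by
    have : Continuous fun τ : ℝ => ‖g (τ • x)‖ₑ := by fun_prop
    exact Measurable.mul (by fun_prop) this.measurable
  have hle : ‖radialAvg k g x‖ₑ ≤ ∫⁻ τ in Set.Ioc (0:ℝ) 1, (p * q) τ := by
    rw [radialAvg, intervalIntegral.integral_of_le zero_le_one]
    refine (enorm_integral_le_lintegral_enorm _).trans
      (setLIntegral_mono' measurableSet_Ioc fun τ hτ => ?_)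
    simp only [Pi.mul_apply, p, q]
    rw [enorm_smul, ← mul_assoc, ← ENNReal.ofReal_mul (Real.rpow_nonneg hτ.1.le _),
      ← Real.rpow_add hτ.1, Real.enorm_of_nonneg (pow_nonneg hτ.1.le _)]
    gcongr
    norm_num
    exact pow_le_of_le_one hτ.1.le hτ.2 (by simp)
  have hcs := ENNReal.lintegral_mul_le_Lp_mul_Lq (volume.restrict (Set.Ioc (0:ℝ) 1))
    Real.HolderConjugate.two_two hp.aemeasurable hq.aemeasurable
  have hp2 : ∫⁻ τ in Set.Ioc (0:ℝ) 1, p τ ^ (2:ℝ) = 2 := by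
    rw [← lintegral_rpow_neg_half]
    refine setLIntegral_congr_fun measurableSet_Ioc fun τ hτ => ?_
    simp only [p]
    rw [ENNReal.ofReal_rpow_of_pos (Real.rpow_pos_of_pos hτ.1 _), ← Real.rpow_mul hτ.1.le]
    norm_num
  have hq2 : ∫⁻ τ in Set.Ioc (0:ℝ) 1, q τ ^ (2:ℝ) =
      ∫⁻ τ in Set.Ioc (0:ℝ) 1, ENNReal.ofReal (τ ^ (5/2 : ℝ)) * ‖g (τ • x)‖ₑ ^ 2 := by
    refine setLIntegral_congr_fun measurableSet_Ioc fun τ hτ => ?_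
    simp only [q]
    rw [ENNReal.mul_rpow_of_nonneg _ _ zero_le_two,
      ENNReal.ofReal_rpow_of_pos (Real.rpow_pos_of_pos hτ.1 _), ← Real.rpow_mul hτ.1.le,
      ENNReal.rpow_two]
    norm_num
  rw [hp2, hq2] at hcs
  calc ‖radialAvg k g x‖ₑ ^ 2 ≤ _ := pow_le_pow_left' (hle.trans hcs) 2
    _ = _ := by
      rw [mul_pow, ← ENNReal.rpow_natCast, ← ENNReal.rpow_natCast, ← ENNReal.rpow_mul,
        ← ENNReal.rpow_mul]
      norm_num

/-- The radial averages are bounded on `L²` of a centred ball. -/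
lemma eLpNorm_radialAvg_le [NormedSpace ℝ F] {g : E3 → F} (hg : Continuous g) (k : ℕ) (R : ℝ) :
    eLpNorm (radialAvg k g) 2 (volume.restrict (ball 0 R)) ≤
      2 * eLpNorm g 2 (volume.restrict (ball 0 R)) := by
  rw [← ENNReal.pow_le_pow_left_iff two_ne_zero, mul_pow, eLpNorm_two_sq, eLpNorm_two_sq]
  set I := ∫⁻ x in ball (0 : E3) R, ‖g x‖ₑ ^ 2
  have hjoint : Measurable fun z : E3 × ℝ =>
      ENNReal.ofReal (z.2 ^ (5/2 : ℝ)) * ‖g (z.2 • z.1)‖ₑ ^ 2 := by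
    have : Continuous fun z : E3 × ℝ => ‖g (z.2 • z.1)‖ₑ := by fun_prop
    exact Measurable.mul (by fun_prop) (this.measurable.pow_const 2)
  have hgm : Measurable fun x => ‖g x‖ₑ ^ 2 := hg.enorm.measurable.pow_const 2
  calc ∫⁻ x in ball (0 : E3) R, ‖radialAvg k g x‖ₑ ^ 2
      ≤ ∫⁻ x in ball (0 : E3) R,
        2 * ∫⁻ τ in Set.Ioc (0:ℝ) 1, ENNReal.ofReal (τ ^ (5/2 : ℝ)) * ‖g (τ • x)‖ₑ ^ 2 :=
        lintegral_mono fun x => enorm_radialAvg_sq_le hg k x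
    _ = 2 * ∫⁻ τ in Set.Ioc (0:ℝ) 1, ∫⁻ x in ball (0 : E3) R,
        ENNReal.ofReal (τ ^ (5/2 : ℝ)) * ‖g (τ • x)‖ₑ ^ 2 := by
        rw [lintegral_const_mul' _ _ (by simp), lintegral_lintegral_swap hjoint.aemeasurable]
    _ ≤ 2 * ∫⁻ τ in Set.Ioc (0:ℝ) 1, ENNReal.ofReal (τ ^ (-(1/2) : ℝ)) * I := by
        gcongr 2 * ?_
        refine setLIntegral_mono' measurableSet_Ioc fun τ hτ => ?_
        rw [lintegral_const_mul' _ _ (by simp)]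
        refine (mul_le_mul_right (setLIntegral_comp_smul_le hgm R hτ.1 hτ.2) _).trans_eq ?_
        rw [← mul_assoc, ← ENNReal.ofReal_mul (Real.rpow_nonneg hτ.1.le _),
          ← Real.rpow_natCast, ← Real.rpow_neg hτ.1.le, ← Real.rpow_add hτ.1]
        norm_num
        rfl
    _ = 2 ^ 2 * I := by
        rw [lintegral_mul_const _ (by fun_prop), lintegral_rpow_neg_half]
        ring

/-- The `L²` norm on a large ball is controlled by the uniformly local `L²` norm. -/
lemma eLpNorm_ball_le {g : E3 → F} (hg : Continuous g) {R : ℝ} (hR : 1 ≤ R) :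
    eLpNorm g 2 (volume.restrict (ball 0 R)) ≤
      ENNReal.ofReal (3 * R ^ (3/2 : ℝ)) *
        ⨆ x : E3, eLpNorm g 2 (volume.restrict (ball x 1)) := by
  set M := ⨆ x : E3, eLpNorm g 2 (volume.restrict (ball x 1))
  set V := volume (ball (0 : E3) 1)
  have hR0 : 0 < R := by linarith
  have hV0 : V ≠ 0 := (measure_ball_pos volume _ one_pos).ne'
  have hVt : V ≠ ⊤ := measure_ball_lt_top.ne
  have hgm : Measurable fun x => ‖g x‖ₑ ^ 2 := hg.enorm.measurable.pow_const 2
  let h : E3 → E3 → ℝ≥0∞ := fun x y =>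
    ({z : E3 × E3 | dist z.2 z.1 < 1}.indicator fun z => ‖g z.2‖ₑ ^ 2) (x, y)
  have hh : Measurable (Function.uncurry h) :=
    (hgm.comp measurable_snd).indicator
      (measurableSet_lt (measurable_snd.dist measurable_fst) measurable_const)
  have hfst (x : E3) : ∫⁻ y, h x y ≤ M ^ 2 := by
    have : ∫⁻ y, h x y = eLpNorm g 2 (volume.restrict (ball x 1)) ^ 2 := by
      rw [eLpNorm_two_sq, ← lintegral_indicator measurableSet_ball]
      rfl
    rw [this]
    exact pow_le_pow_left' (le_iSup (fun x : E3 => eLpNorm g 2 (volume.restrict (ball x 1))) x) 2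
  have hsnd (y : E3) (hy : y ∈ ball (0 : E3) R) :
      ∫⁻ x in ball (0 : E3) (R + 1), h x y = V * ‖g y‖ₑ ^ 2 := by
    have hsub : ball y 1 ⊆ ball (0 : E3) (R + 1) := ball_subset_ball' (by
      rw [mem_ball] at hy; linarith)
    have heq : (fun x => h x y) = (ball y 1).indicator fun _ => ‖g y‖ₑ ^ 2 := by
      funext x
      simp [h, Set.indicator, dist_comm]
    rw [heq, lintegral_indicator measurableSet_ball, Measure.restrict_restrict measurableSet_ball,
      Set.inter_eq_left.2 hsub, setLIntegral_const, mul_comm, Measure.addHaar_ball_center]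
  have hvol : volume (ball (0 : E3) (R + 1)) ≤ ENNReal.ofReal (8 * R ^ 3) * V := by
    rw [Measure.addHaar_ball volume _ (by linarith)]
    gcongr
    simp only [finrank_euclideanSpace, Fintype.card_fin]
    calc (R + 1) ^ 3 ≤ (2 * R) ^ 3 := by gcongr; linarith
      _ = 8 * R ^ 3 := by ring
  have key : V * ∫⁻ y in ball (0 : E3) R, ‖g y‖ₑ ^ 2 ≤
      V * (ENNReal.ofReal (8 * R ^ 3) * M ^ 2) := by
    calc V * ∫⁻ y in ball (0 : E3) R, ‖g y‖ₑ ^ 2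
        = ∫⁻ y in ball (0 : E3) R, ∫⁻ x in ball (0 : E3) (R + 1), h x y := by
          rw [← lintegral_const_mul' _ _ hVt]
          exact setLIntegral_congr_fun measurableSet_ball fun y hy => (hsnd y hy).symm
      _ ≤ ∫⁻ y, ∫⁻ x in ball (0 : E3) (R + 1), h x y := setLIntegral_le_lintegral _ _
      _ = ∫⁻ x in ball (0 : E3) (R + 1), ∫⁻ y, h x y :=
          (lintegral_lintegral_swap hh.aemeasurable).symm
      _ ≤ ∫⁻ x in ball (0 : E3) (R + 1), M ^ 2 := lintegral_mono fun x => hfst x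
      _ = M ^ 2 * volume (ball (0 : E3) (R + 1)) := setLIntegral_const _ _
      _ ≤ M ^ 2 * (ENNReal.ofReal (8 * R ^ 3) * V) := by gcongr
      _ = V * (ENNReal.ofReal (8 * R ^ 3) * M ^ 2) := by ring
  rw [← ENNReal.pow_le_pow_left_iff two_ne_zero, mul_pow, eLpNorm_two_sq]
  refine ((ENNReal.mul_le_mul_iff_right hV0 hVt).1 key).trans ?_
  gcongr
  rw [← ENNReal.ofReal_pow (by positivity)]
  gcongr
  have : (R ^ (3/2 : ℝ)) ^ 2 = R ^ 3 := by
    rw [← Real.rpow_natCast, ← Real.rpow_mul hR0.le, ← Real.rpow_natCast]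
    norm_num
  rw [mul_pow, this]
  gcongr
  norm_num

end Estimates

lemma mem_mSet {s : ℕ} {α : Fin 3 → ℕ} : α ∈ mSet s ↔ ∑ i, α i ≤ s := by
  simp only [mSet, Finset.mem_filter, Finset.mem_Iic, and_iff_right_iff_imp]
  exact fun h i => (Finset.single_le_sum (fun _ _ => Nat.zero_le _) (Finset.mem_univ i)).trans h

lemma eLpNorm_Dm_radialAvg_le {s : ℕ} {u : E3 → E3} (hu : ContDiff ℝ (⊤ : ℕ∞) u) {R : ℝ}
    (hR : 1 ≤ R) {α : Fin 3 → ℕ} (hα : α ∈ mSet s) :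
    eLpNorm (Dm α (radialAvg 0 u)) 2 (volume.restrict (ball 0 R)) ≤
      ENNReal.ofReal (6 * R ^ (3/2 : ℝ)) * ulSobolev s u := by
  have hc := (contDiff_Dm hu α).continuous
  rw [Dm_radialAvg hu]
  calc _ ≤ 2 * eLpNorm (Dm α u) 2 (volume.restrict (ball 0 R)) := eLpNorm_radialAvg_le hc _ R
    _ ≤ 2 * (ENNReal.ofReal (3 * R ^ (3/2 : ℝ)) * ulSobolev s u) := by
      gcongr
      refine (eLpNorm_ball_le hc hR).trans ?_
      gcongr
      exact Finset.single_le_sum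
        (f := fun α => ⨆ x : E3, eLpNorm (Dm α u) 2 (volume.restrict (ball x 1)))
        (fun _ _ => zero_le) hα
    _ = _ := by
      rw [← mul_assoc]
      congr 1
      rw [← ENNReal.ofReal_ofNat 2, ← ENNReal.ofReal_mul zero_le_two]
      ring_nf

lemma eLpNorm_Dm_streamFun_le {s : ℕ} {u : E3 → E3} (hu : ContDiff ℝ (⊤ : ℕ∞) u) {R : ℝ}
    (hR : 1 ≤ R) {α : Fin 3 → ℕ} (hα : α ∈ mSet s) :
    eLpNorm (Dm α (streamFun u)) 2 (volume.restrict (ball 0 R)) ≤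
      ENNReal.ofReal (6 * (1 + s) * ‖crossCLM‖ * R ^ (5/2 : ℝ)) * ulSobolev s u := by
  have hR0 : 0 < R := by linarith
  set μ := volume.restrict (ball (0 : E3) R)
  set N := ENNReal.ofReal (6 * R ^ (3/2 : ℝ)) * ulSobolev s u with hN
  have hw := contDiff_radialAvg hu 0
  have hform : Dm α (streamFun u) = (fun x => (-crossCLM) x (Dm α (radialAvg 0 u) x)) +
      ∑ i, fun x => ((α i : ℝ) • (-crossCLM) (EuclideanSpace.single i 1))
        (Dm (α - Pi.single i 1) (radialAvg 0 u) x) := by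
    have : streamFun u = fun x => (-crossCLM) x (radialAvg 0 u x) := streamFun_eq hu.continuous
    rw [this, Dm_bilin _ hw]
    funext x
    simp only [Pi.add_apply, Finset.sum_apply]
  have hD (β) : Continuous (Dm β (radialAvg 0 u)) := (contDiff_Dm hw β).continuous
  have hmain : eLpNorm (fun x => (-crossCLM) x (Dm α (radialAvg 0 u) x)) 2 μ ≤
      ENNReal.ofReal (‖crossCLM‖ * R) * N := by
    refine (eLpNorm_le_mul_eLpNorm_of_ae_le_mul (c := ‖crossCLM‖ * R)
      (g := Dm α (radialAvg 0 u)) ?_ 2).trans ?_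
    · refine (ae_restrict_iff' measurableSet_ball).2 (.of_forall fun x hx => ?_)
      refine ((-crossCLM).le_opNorm₂ _ _).trans ?_
      rw [ContinuousLinearMap.opNorm_neg]
      gcongr
      exact (mem_ball_zero_iff.1 hx).le
    · gcongr
      exact eLpNorm_Dm_radialAvg_le hu hR hα
  have hterm (i : Fin 3) : eLpNorm (fun x =>
      ((α i : ℝ) • (-crossCLM) (EuclideanSpace.single i 1))
        (Dm (α - Pi.single i 1) (radialAvg 0 u) x)) 2 μ ≤
      ENNReal.ofReal (α i * ‖crossCLM‖) * N := by
    refine (eLpNorm_le_mul_eLpNorm_of_ae_le_mul (c := α i * ‖crossCLM‖)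
      (g := Dm (α - Pi.single i 1) (radialAvg 0 u)) (.of_forall fun x => ?_) 2).trans ?_
    · refine (ContinuousLinearMap.le_opNorm _ _).trans ?_
      gcongr
      rw [norm_smul, Real.norm_natCast]
      gcongr
      refine ((-crossCLM).le_opNorm _).trans ?_
      simp
    · gcongr
      refine eLpNorm_Dm_radialAvg_le hu hR (mem_mSet.2 ?_)
      exact (Finset.sum_le_sum fun j _ => Nat.sub_le _ _).trans (mem_mSet.1 hα)
  have hsum : ∑ i, (α i : ℝ) ≤ s := by exact_mod_cast mem_mSet.1 hα
  rw [hform]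
  calc _ ≤ _ := eLpNorm_add_le (by fun_prop)
        (Finset.aestronglyMeasurable_sum _ fun i _ =>
          Continuous.aestronglyMeasurable (by fun_prop)) (by norm_num)
    _ ≤ ENNReal.ofReal (‖crossCLM‖ * R) * N + ∑ i, ENNReal.ofReal (α i * ‖crossCLM‖) * N := by
      gcongr
      refine (eLpNorm_sum_le (fun i _ => ?_) (by norm_num)).trans
        (Finset.sum_le_sum fun i _ => hterm i)
      exact Continuous.aestronglyMeasurable (by fun_prop)
    _ = ENNReal.ofReal ((‖crossCLM‖ * R + ∑ i, α i * ‖crossCLM‖) * (6 * R ^ (3/2 : ℝ))) *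
        ulSobolev s u := by
      rw [← Finset.sum_mul, ← add_mul, ← ENNReal.ofReal_sum_of_nonneg (fun i _ => by positivity),
        ← ENNReal.ofReal_add (by positivity) (by positivity), hN, ← mul_assoc,
        ← ENNReal.ofReal_mul (by positivity)]
    _ ≤ _ := by
      refine mul_le_mul_left (ENNReal.ofReal_le_ofReal ?_) _
      have h52 : R ^ (5/2 : ℝ) = R * R ^ (3/2 : ℝ) := by
        rw [← Real.rpow_one_add' hR0.le (by norm_num)]
        norm_num
      rw [h52, ← Finset.sum_mul]
      calc _ ≤ (‖crossCLM‖ * R + (s * R) * ‖crossCLM‖) * (6 * R ^ (3/2 : ℝ)) := by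
            gcongr
            exact hsum.trans (le_mul_of_one_le_right (by positivity) hR)
        _ = _ := by ring

/-- **The quantitative estimate (2.13) of Lemma 2.13 of the paper**: the stream
function `ψ` of a smooth divergence-free field `u` with finite `H^s_ul` norm
satisfies `∑_{|α| ≤ s} ‖D^α ψ‖_{L²(B_R(0))} ≤ C R^{5/2} ‖u‖_{H^s_ul}`. -/
theorem stream_function_estimate (s : ℕ) :
    ∃ C : ℝ, 0 < C ∧
      ∀ (R : ℝ), 1 ≤ R →
        ∀ u : E3 → E3, ContDiff ℝ (⊤ : ℕ∞) u → (∀ x, divg u x = 0) →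
          ulSobolev s u ≠ ⊤ →
          (∑ α ∈ mSet s,
              eLpNorm (Dm α (streamFun u)) 2 (volume.restrict (ball (0 : E3) R)))
            ≤ ENNReal.ofReal (C * R ^ ((5 : ℝ) / 2)) * ulSobolev s u := by
  refine ⟨(mSet s).card * (6 * (1 + s) * ‖crossCLM‖) + 1, by positivity,
    fun R hR u hu _ _ => ?_⟩
  have hR0 : 0 < R := by linarith
  calc _ ≤ ∑ α ∈ mSet s,
        ENNReal.ofReal (6 * (1 + s) * ‖crossCLM‖ * R ^ (5/2 : ℝ)) * ulSobolev s u :=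
        Finset.sum_le_sum fun α hα => eLpNorm_Dm_streamFun_le hu hR hα
    _ = ENNReal.ofReal ((mSet s).card * (6 * (1 + s) * ‖crossCLM‖) * R ^ (5/2 : ℝ)) *
        ulSobolev s u := by
      rw [Finset.sum_const, nsmul_eq_mul, ← mul_assoc, ← ENNReal.ofReal_natCast,
        ← ENNReal.ofReal_mul (by positivity),
        mul_assoc ((mSet s).card : ℝ)]
    _ ≤ _ := by
      gcongr
      linarith
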